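/- arXiv:1112.0201 — 3 statements merged into one kernel-verified Lean document; each statement's English description precedes it below -/
import Mathlib

section
/- For every fixed ε > 0 there are constants C₁ (depending on ε) and C₂ (depending on k) such that for all Q ≥ 1: (i) Σ_{Q < q ≤ 2Q} w_3(q)^4 ≤ C₁·Q^{−1+ε}; and (ii) for every integer k ≥ 4, Σ_{Q < q ≤ 2Q} w_k(q)^k ≤ C₂·Q^{−1+1/k}. -/
open scoped BigOperators

/-- The multiplicative function `w_k`, with `w_k(p^{ku+v}) = k p^{-u-1/2}` if `v = 1`
and `w_k(p^{ku+v}) = p^{-u-1}` if `2 ≤ v ≤ k` (where `u ≥ 0`, `1 ≤ v ≤ k`). -/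
noncomputable def wk (k : ℕ) (n : ℕ) : ℝ :=
  ∏ p ∈ n.primeFactors,
    (if (n.factorization p - 1) % k = 0 then
      (k : ℝ) * (p : ℝ) ^ (-(((n.factorization p - 1) / k : ℕ) : ℝ) - 1 / 2)
    else
      (p : ℝ) ^ (-(((n.factorization p - 1) / k : ℕ) : ℝ) - 1))

/-- The local factor of `w_k` at `p ^ j`. -/
noncomputable def wLoc (k p j : ℕ) : ℝ :=
  if (j - 1) % k = 0 then
      (k : ℝ) * (p : ℝ) ^ (-(((j - 1) / k : ℕ) : ℝ) - 1 / 2)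
    else
      (p : ℝ) ^ (-(((j - 1) / k : ℕ) : ℝ) - 1)

/-- Multiplicative function with prescribed local factors. -/
noncomputable def mulFn (E : ℕ → ℕ → ℝ) (n : ℕ) : ℝ :=
  ∏ p ∈ n.primeFactors, E p (n.factorization p)

lemma mulFn_one (E : ℕ → ℕ → ℝ) : mulFn E 1 = 1 := by simp [mulFn]

lemma mulFn_mul (E : ℕ → ℕ → ℝ) {m n : ℕ} (h : m.Coprime n) :
    mulFn E (m * n) = mulFn E m * mulFn E n := by
  unfold mulFn
  rw [h.primeFactors_mul, Finset.prod_union h.disjoint_primeFactors]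
  congr 1
  · refine Finset.prod_congr rfl fun p hp => ?_
    rw [Nat.factorization_eq_of_coprime_left h (by simpa using hp)]
  · refine Finset.prod_congr rfl fun p hp => ?_
    rw [Nat.factorization_eq_of_coprime_right h (by simpa using hp)]

lemma mulFn_prime_pow (E : ℕ → ℕ → ℝ) {p j : ℕ} (hp : p.Prime) (hj : j ≠ 0) :
    mulFn E (p ^ j) = E p j := by
  unfold mulFn
  rw [Nat.primeFactors_prime_pow hj hp]
  simp [hp.factorization_self]

lemma wLoc_nonneg (k p j : ℕ) : 0 ≤ wLoc k p j := by
  unfold wLoc; split_ifs <;> positivity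

lemma wk_pow_eq (k n l : ℕ) : wk k n ^ l = mulFn (fun p j => wLoc k p j ^ l) n := by
  unfold wk mulFn wLoc
  rw [Finset.prod_pow]

lemma mulFn_nonneg (E : ℕ → ℕ → ℝ) (hE : ∀ p j, 0 ≤ E p j) (n : ℕ) : 0 ≤ mulFn E n :=
  Finset.prod_nonneg fun _ _ => hE _ _

lemma euler_bound (h : ℕ → ℝ) (h0 : ∀ n, 0 ≤ h n) (h1 : h 1 = 1)
    (hmul : ∀ {m n : ℕ}, m.Coprime n → h (m * n) = h m * h n)
    (C δ ρ : ℝ) (hC : 0 < C) (hδ : 0 < δ) (hρ : 0 ≤ ρ) (hρ1 : ρ < 1)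
    (hb : ∀ p j : ℕ, p.Prime → j ≠ 0 → h (p ^ j) ≤ C * (p : ℝ) ^ (-(1 + δ)) * ρ ^ j) :
    ∃ B > 0, ∀ N : ℕ, ∑ q ∈ Finset.Ico 1 N, h q ≤ B := by
  have hS : Summable (fun n : ℕ => (n : ℝ) ^ (-(1 + δ))) :=
    Real.summable_nat_rpow.2 (by linarith)
  have hgeo := summable_geometric_of_lt_one hρ hρ1
  have hb' : ∀ p n : ℕ, p.Prime → h (p ^ (n + 1)) ≤ C * (p : ℝ) ^ (-(1 + δ)) * ρ ^ n := by
    intro p n hp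
    refine (hb p (n + 1) hp (by omega)).trans ?_
    have : ρ ^ (n + 1) ≤ ρ ^ n := pow_le_pow_of_le_one hρ hρ1.le (by omega)
    have : 0 ≤ C * (p : ℝ) ^ (-(1 + δ)) := by positivity
    gcongr
  have hs1 : ∀ p : ℕ, p.Prime → Summable (fun n : ℕ => h (p ^ (n + 1))) := fun p hp =>
    Summable.of_nonneg_of_le (fun _ => h0 _) (fun n => hb' p n hp) (hgeo.mul_left _)
  have hs : ∀ p : ℕ, p.Prime → Summable (fun n : ℕ => h (p ^ n)) := fun p hp =>
    (summable_nat_add_iff 1).1 (hs1 p hp)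
  set D := C * (1 - ρ)⁻¹ with hD
  have hD0 : 0 < D := mul_pos hC (inv_pos.2 (by linarith))
  have ht : ∀ p : ℕ, p.Prime → ∑' n, h (p ^ n) ≤ 1 + D * (p : ℝ) ^ (-(1 + δ)) := by
    intro p hp
    rw [(hs p hp).tsum_eq_zero_add]
    have := (hs1 p hp).tsum_le_tsum (fun n => hb' p n hp) (hgeo.mul_left _)
    rw [tsum_mul_left, tsum_geometric_of_lt_one hρ hρ1] at this
    simp only [pow_zero, h1]
    rw [hD]
    linarith
  refine ⟨Real.exp (D * ∑' n : ℕ, (n : ℝ) ^ (-(1 + δ))), Real.exp_pos _, fun N => ?_⟩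
  have key := (EulerProduct.summable_and_hasSum_smoothNumbers_prod_primesBelow_tsum (f := h)
    h1 hmul (fun {p} hp => (hs p hp).norm) N).2
  have key2 : HasSum ((N.smoothNumbers : Set ℕ).indicator h) (∏ p ∈ N.primesBelow, ∑' n, h (p ^ n)) :=
    hasSum_subtype_iff_indicator.1 key
  have e1 : ∑ q ∈ Finset.Ico 1 N, h q ≤ ∏ p ∈ N.primesBelow, ∑' n, h (p ^ n) := by
    have := sum_le_hasSum (Finset.Ico 1 N) (fun i _ => Set.indicator_nonneg (fun _ _ => h0 _) i) key2
    refine le_trans (le_of_eq ?_) this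
    refine Finset.sum_congr rfl fun q hq => ?_
    rw [Finset.mem_Ico] at hq
    rw [Set.indicator_of_mem]
    exact Nat.mem_smoothNumbers_of_lt (by omega) hq.2
  refine e1.trans ?_
  calc _ ≤ ∏ p ∈ N.primesBelow, Real.exp (D * (p : ℝ) ^ (-(1 + δ))) := by
        refine Finset.prod_le_prod (fun p _ => tsum_nonneg fun _ => h0 _) fun p hp => ?_
        refine (ht p (Nat.prime_of_mem_primesBelow hp)).trans ?_
        linarith [Real.add_one_le_exp (D * (p : ℝ) ^ (-(1 + δ)))]
    _ = Real.exp (D * ∑ p ∈ N.primesBelow, (p : ℝ) ^ (-(1 + δ))) := by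
        rw [← Real.exp_sum, Finset.mul_sum]
    _ ≤ _ := by
        gcongr
        exact hS.sum_le_tsum _ (fun _ _ => by positivity)

/-- The geometric ratio. -/
noncomputable def rho (k : ℕ) : ℝ := (2 : ℝ) ^ (-(1 / (k : ℝ)))

lemma rho_nonneg (k : ℕ) : 0 ≤ rho k := by unfold rho; positivity

lemma rho_lt_one (k : ℕ) (hk : 0 < k) : rho k < 1 := by
  unfold rho
  apply Real.rpow_lt_one_of_one_lt_of_neg (by norm_num)
  have : (0 : ℝ) < k := by exact_mod_cast hk
  have : 0 < 1 / (k : ℝ) := by positivity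
  linarith

lemma local_bound (k p j : ℕ) (a δ x : ℝ) (hk : 0 < k) (hp : p.Prime) (ha : 0 ≤ a)
    (hj : (j : ℝ) ≤ k * (a + 2)) (hx : x ≤ -(1 + δ) - a) :
    (p : ℝ) ^ x ≤ 4 * (p : ℝ) ^ (-(1 + δ)) * rho k ^ j := by
  have hp2 : (2 : ℝ) ≤ p := by exact_mod_cast hp.two_le
  have hp0 : (0 : ℝ) < p := by linarith
  have hk0 : (0 : ℝ) < k := by exact_mod_cast hk
  have e1 : (p : ℝ) ^ x ≤ (p : ℝ) ^ (-(1 + δ)) * (p : ℝ) ^ (-a) := by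
    rw [← Real.rpow_add hp0]
    exact Real.rpow_le_rpow_of_exponent_le (by linarith) (by linarith)
  have e2 : (p : ℝ) ^ (-a) ≤ 2 ^ (-a) :=
    Real.rpow_le_rpow_of_nonpos (by norm_num) hp2 (by linarith)
  have e3 : (2 : ℝ) ^ (-a) ≤ 4 * rho k ^ j := by
    unfold rho
    rw [← Real.rpow_natCast, ← Real.rpow_mul (by norm_num),
      show (4 : ℝ) = 2 ^ (2 : ℝ) by norm_num, ← Real.rpow_add (by norm_num)]
    apply Real.rpow_le_rpow_of_exponent_le (by norm_num)
    have : (j : ℝ) / k ≤ a + 2 := by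
      rw [div_le_iff₀ hk0]; linarith
    have h2 : -(1 / (k : ℝ)) * j = -((j : ℝ) / k) := by ring
    rw [h2]; linarith
  calc _ ≤ (p : ℝ) ^ (-(1 + δ)) * (p : ℝ) ^ (-a) := e1
    _ ≤ (p : ℝ) ^ (-(1 + δ)) * (4 * rho k ^ j) := by
        gcongr; exact e2.trans e3
    _ = _ := by ring

lemma part_one (ε : ℝ) (hε : 0 < ε) (hε1 : ε < 1) :
    ∃ C₁ > 0, ∀ Q : ℝ, 1 ≤ Q →
      ∑ q ∈ Finset.Ioc ⌊Q⌋₊ ⌊2 * Q⌋₊, wk 3 q ^ 4 ≤ C₁ * Q ^ (-1 + ε) := by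
  obtain ⟨B, hB, hBN⟩ := euler_bound (fun n => (n : ℝ) ^ (1 - ε) * wk 3 n ^ 4)
    (fun n => by rw [wk_pow_eq]; exact mul_nonneg (by positivity)
                  (mulFn_nonneg _ (fun _ _ => pow_nonneg (wLoc_nonneg _ _ _) _) _))
    (by simp [wk])
    (by
      intro m n hmn
      simp only [wk_pow_eq]
      rw [mulFn_mul _ hmn, Nat.cast_mul, Real.mul_rpow (by positivity) (by positivity)]
      ring) 324 ε (rho 3) (by norm_num) hε (rho_nonneg 3) (rho_lt_one 3 (by norm_num)) (by
      intro p j hp hj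
      simp only [wk_pow_eq]
      rw [mulFn_prime_pow _ hp hj]
      have hp0 : (0 : ℝ) < p := by exact_mod_cast hp.pos
      have hlb := fun x => local_bound 3 p j (((j - 1) / 3 : ℕ) : ℝ) ε x (by norm_num) hp
        (by positivity) (by
          have : j ≤ 3 * ((j - 1) / 3 + 2) := by omega
          exact_mod_cast this)
      have hpos : 0 ≤ 4 * (p : ℝ) ^ (-(1 + ε)) * rho 3 ^ j := by
        have := rho_nonneg 3
        positivity
      have hj1 : (1 : ℝ) ≤ j := by exact_mod_cast Nat.one_le_iff_ne_zero.2 hj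
      have hju : (j : ℝ) ≤ 3 * (((j - 1) / 3 : ℕ) : ℝ) + 3 := by
        have : j ≤ 3 * ((j - 1) / 3) + 3 := by omega
        exact_mod_cast this
      have hu0 : (0 : ℝ) ≤ (((j - 1) / 3 : ℕ) : ℝ) := by positivity
      unfold wLoc
      split_ifs with hc
      · have hju' : (j : ℝ) = 3 * (((j - 1) / 3 : ℕ) : ℝ) + 1 := by
          have : j = 3 * ((j - 1) / 3) + 1 := by omega
          exact_mod_cast this
        generalize (((j - 1) / 3 : ℕ) : ℝ) = u at *
        have := hlb (j * (1 - ε) + (-u - 1 / 2) * (4 : ℕ)) (by push_cast; nlinarith)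
        rw [Real.rpow_add hp0, Real.rpow_mul hp0.le, Real.rpow_natCast,
          Real.rpow_mul hp0.le, Real.rpow_natCast] at this
        push_cast
        rw [mul_pow]
        nlinarith
      · generalize (((j - 1) / 3 : ℕ) : ℝ) = u at *
        have := hlb (j * (1 - ε) + (-u - 1) * (4 : ℕ)) (by push_cast; nlinarith)
        rw [Real.rpow_add hp0, Real.rpow_mul hp0.le, Real.rpow_natCast,
          Real.rpow_mul hp0.le, Real.rpow_natCast] at this
        push_cast
        nlinarith)
  refine ⟨B, hB, fun Q hQ => ?_⟩
  have hQ0 : 0 < Q := by linarith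
  have hw : ∀ q, 0 ≤ wk 3 q ^ 4 := fun q => by
    rw [wk_pow_eq]; exact mulFn_nonneg _ (fun _ _ => pow_nonneg (wLoc_nonneg _ _ _) _) _
  calc _ ≤ ∑ q ∈ Finset.Ioc ⌊Q⌋₊ ⌊2 * Q⌋₊, ((q : ℝ) ^ (1 - ε) * wk 3 q ^ 4) * Q ^ (-1 + ε) := by
        refine Finset.sum_le_sum fun q hq => ?_
        have hq1 : Q < q := (Nat.floor_lt hQ0.le).1 (Finset.mem_Ioc.1 hq).1
        have h1 : Q ^ (1 - ε) ≤ (q : ℝ) ^ (1 - ε) :=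
          Real.rpow_le_rpow hQ0.le hq1.le (by linarith)
        have h2 : Q ^ (1 - ε) * Q ^ (-1 + ε) = 1 := by
          rw [← Real.rpow_add hQ0]; simp
        have h3 : 1 ≤ (q : ℝ) ^ (1 - ε) * Q ^ (-1 + ε) := by
          refine h2.symm.le.trans ?_
          gcongr
        nlinarith [hw q]
    _ = (∑ q ∈ Finset.Ioc ⌊Q⌋₊ ⌊2 * Q⌋₊, ((q : ℝ) ^ (1 - ε) * wk 3 q ^ 4)) * Q ^ (-1 + ε) := by
        rw [Finset.sum_mul]
    _ ≤ _ := by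
        gcongr
        refine le_trans ?_ (hBN (⌊2 * Q⌋₊ + 1))
        refine Finset.sum_le_sum_of_subset_of_nonneg ?_ fun q _ _ => mul_nonneg (by positivity) (hw q)
        intro q hq
        simp only [Finset.mem_Ioc, Finset.mem_Ico] at *
        omega

/-- Local factor with the exponent `k` removed. -/
noncomputable def E0 (k p j : ℕ) : ℝ := if j = k then 0 else wLoc k p j ^ k

lemma E0_nonneg (k p j : ℕ) : 0 ≤ E0 k p j := by
  unfold E0; split_ifs
  · exact le_rfl
  · exact pow_nonneg (wLoc_nonneg _ _ _) _

lemma decomp (k : ℕ) (hk : 4 ≤ k) (q : ℕ) (hq : q ≠ 0) :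
    ∃ m r : ℕ, q = m ^ k * r ∧ wk k q ^ k = ((m : ℝ) ^ k)⁻¹ * mulFn (E0 k) r := by
  simp only [wk_pow_eq]
  induction q using Nat.recOnPosPrimePosCoprime with
  | zero => exact absurd rfl hq
  | one => exact ⟨1, 1, by simp, by simp [mulFn_one]⟩
  | prime_pow p j hp hj =>
    rw [mulFn_prime_pow _ hp hj.ne']
    by_cases hjk : j = k
    · subst hjk
      refine ⟨p, 1, by simp, ?_⟩
      rw [mulFn_one]
      unfold wLoc
      rw [if_neg (by rw [Nat.mod_eq_of_lt (by omega)]; omega), Nat.div_eq_of_lt (by omega)]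
      simp [Real.rpow_neg_one]
    · refine ⟨1, p ^ j, by simp, ?_⟩
      rw [mulFn_prime_pow _ hp hj.ne']
      simp [E0, hjk]
  | coprime a b ha hb hab iha ihb =>
    obtain ⟨m, r, h1, h2⟩ := iha (by omega)
    obtain ⟨m', r', h1', h2'⟩ := ihb (by omega)
    refine ⟨m * m', r * r', by rw [h1, h1']; ring, ?_⟩
    rw [mulFn_mul _ hab, h2, h2', mulFn_mul]
    · push_cast
      rw [mul_pow, mul_inv]
      ring
    · exact Nat.Coprime.coprime_dvd_left ⟨m ^ k, by rw [h1]; ring⟩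
        (Nat.Coprime.coprime_dvd_right ⟨m' ^ k, by rw [h1']; ring⟩ hab)

lemma part_two_local (k p j : ℕ) (hk : 4 ≤ k) (hp : p.Prime) (hj : j ≠ 0) :
    (((p ^ j : ℕ) : ℝ)) ^ (1 - 1 / (k : ℝ)) * E0 k p j
      ≤ (4 * (k : ℝ) ^ k) * (p : ℝ) ^ (-(1 + 1 / (k : ℝ))) * rho k ^ j := by
  have hp0 : (0 : ℝ) < p := by exact_mod_cast hp.pos
  have hr := rho_nonneg k
  have hk4 : (4 : ℝ) ≤ k := by exact_mod_cast hk
  have hkk : (1 : ℝ) ≤ (k : ℝ) ^ k := one_le_pow₀ (by linarith)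
  have hX0 : 0 ≤ (p : ℝ) ^ (-(1 + 1 / (k : ℝ))) * rho k ^ j := by positivity
  unfold E0
  split_ifs with hjk
  · rw [mul_zero]; positivity
  obtain ⟨u, v, hv, hjuv⟩ : ∃ u v, v < k ∧ j = k * u + v + 1 :=
    ⟨(j - 1) / k, (j - 1) % k, Nat.mod_lt _ (by omega), by
      have := Nat.div_add_mod (j - 1) k; omega⟩
  have hdiv : (j - 1) / k = u := by
    rw [hjuv, Nat.add_sub_cancel, Nat.mul_add_div (by omega), Nat.div_eq_of_lt hv, add_zero]
  have hmod : (j - 1) % k = v := by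
    rw [hjuv, Nat.add_sub_cancel, Nat.mul_add_mod, Nat.mod_eq_of_lt hv]
  have hjR : (j : ℝ) = k * u + v + 1 := by rw [hjuv]; push_cast; ring
  have hvR : (v : ℝ) + 1 ≤ k := by exact_mod_cast hv
  have hk0 : (0 : ℝ) < k := by linarith
  set i : ℝ := 1 / (k : ℝ) with hi
  have hik : k * i = 1 := by rw [hi]; field_simp
  have hi0 : 0 < i := by positivity
  have hi4 : i ≤ 1 / 4 := by rw [hi]; gcongr
  have hu0 : (0 : ℝ) ≤ u := by positivity
  have hv0 : (0 : ℝ) ≤ v := by positivity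
  unfold wLoc
  rw [hdiv, hmod]
  have expand : (j : ℝ) * (1 - i) = k * u - u + (v + 1) * (1 - i) := by
    rw [hjR]; linear_combination (-(u : ℝ)) * hik
  split_ifs with hc
  · have := local_bound k p j u i (j * (1 - i) + (-u - 1 / 2) * (k : ℕ)) (by omega) hp hu0
      (by rw [hjR]; nlinarith) (by rw [expand, hc]; push_cast; nlinarith)
    rw [Real.rpow_add hp0, Real.rpow_mul hp0.le, Real.rpow_natCast,
          Real.rpow_mul hp0.le, Real.rpow_natCast] at this
    rw [mul_pow]
    push_cast
    calc _ = (k : ℝ) ^ k * (((p : ℝ) ^ j) ^ (1 - i) * ((p : ℝ) ^ (-(u : ℝ) - 1 / 2)) ^ k) := by ring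
      _ ≤ (k : ℝ) ^ k * (4 * (p : ℝ) ^ (-(1 + i)) * rho k ^ j) := by gcongr
      _ = _ := by ring
  · have : (p : ℝ) ^ (j * (1 - i) + (-(u : ℝ) - 1) * (k : ℕ))
        ≤ 4 * (p : ℝ) ^ (-(1 + i)) * rho k ^ j := by
      by_cases hvk : v + 1 = k
      · have hu1 : 1 ≤ u := by
          rcases Nat.eq_zero_or_pos u with h | h
          · exfalso; apply hjk; rw [hjuv, h]; omega
          · exact h
        have hu1R : (1 : ℝ) ≤ u := by exact_mod_cast hu1
        have hvkR : (v : ℝ) + 1 = k := by exact_mod_cast hvk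
        exact local_bound k p j (u - 1) i _ (by omega) hp (by linarith)
          (by rw [hjR]; nlinarith) (by rw [expand, hvkR]; nlinarith)
      · have hvkR : (v : ℝ) + 2 ≤ k := by
          have : v + 2 ≤ k := by omega
          exact_mod_cast this
        exact local_bound k p j u i _ (by omega) hp hu0
          (by rw [hjR]; nlinarith) (by rw [expand]; nlinarith)
    rw [Real.rpow_add hp0, Real.rpow_mul hp0.le, Real.rpow_natCast,
          Real.rpow_mul hp0.le, Real.rpow_natCast] at this
    push_cast
    refine this.trans ?_
    nlinarith

lemma part_two (k : ℕ) (hk : 4 ≤ k) :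
    ∃ C₂ > 0, ∀ Q : ℝ, 1 ≤ Q →
      ∑ q ∈ Finset.Ioc ⌊Q⌋₊ ⌊2 * Q⌋₊, wk k q ^ k ≤ C₂ * Q ^ (-1 + 1 / (k : ℝ)) := by
  have hk0 : (0 : ℝ) < k := by exact_mod_cast (by omega : 0 < k)
  have hi0 : 0 < 1 / (k : ℝ) := by positivity
  obtain ⟨B, hB, hBN⟩ := euler_bound (fun n => (n : ℝ) ^ (1 - 1 / (k : ℝ)) * mulFn (E0 k) n)
    (fun n => mul_nonneg (by positivity) (mulFn_nonneg _ (E0_nonneg k) _))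
    (by simp [mulFn_one])
    (by
      intro m n hmn
      rw [mulFn_mul _ hmn, Nat.cast_mul, Real.mul_rpow (by positivity) (by positivity)]
      ring) (4 * (k : ℝ) ^ k) (1 / (k : ℝ)) (rho k) (by positivity) hi0 (rho_nonneg k)
      (rho_lt_one k (by omega)) (by
      intro p j hp hj
      rw [mulFn_prime_pow _ hp hj]
      exact part_two_local k p j hk hp hj)
  refine ⟨B * 2 ^ (1 / (k : ℝ)), by positivity, fun Q hQ => ?_⟩
  have hQ0 : 0 < Q := by linarith
  have hdec : ∀ q : ℕ, ∃ m r : ℕ, q ≠ 0 → q = m ^ k * r ∧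
      wk k q ^ k = ((m : ℝ) ^ k)⁻¹ * mulFn (E0 k) r := by
    intro q
    by_cases hq : q = 0
    · exact ⟨0, 0, fun h => absurd hq h⟩
    · obtain ⟨m, r, h⟩ := decomp k hk q hq
      exact ⟨m, r, fun _ => h⟩
  choose M R hMR using hdec
  have hS : ∀ q ∈ Finset.Ioc ⌊Q⌋₊ ⌊2 * Q⌋₊, q ≠ 0 ∧ Q < q ∧ (q : ℝ) ≤ 2 * Q := by
    intro q hq
    rw [Finset.mem_Ioc] at hq
    exact ⟨by omega, (Nat.floor_lt hQ0.le).1 hq.1, (Nat.le_floor_iff (by positivity)).1 hq.2⟩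
  have hmaps : ∀ q ∈ Finset.Ioc ⌊Q⌋₊ ⌊2 * Q⌋₊, R q ∈ Finset.Ico 1 (⌊2 * Q⌋₊ + 1) := by
    intro q hq
    have h0 := (hS q hq).1
    have h1 := (hMR q h0).1
    have hd : R q ∣ q := ⟨M q ^ k, by rw [mul_comm]; exact h1⟩
    have := Nat.le_of_dvd (Nat.pos_of_ne_zero h0) hd
    have := Nat.pos_of_dvd_of_pos hd (Nat.pos_of_ne_zero h0)
    rw [Finset.mem_Ioc] at hq
    rw [Finset.mem_Ico]
    omega
  rw [← Finset.sum_fiberwise_of_maps_to hmaps]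
  calc _ ≤ ∑ r ∈ Finset.Ico 1 (⌊2 * Q⌋₊ + 1), ((r : ℝ) ^ (1 - 1 / (k : ℝ)) * mulFn (E0 k) r) *
        (2 ^ (1 / (k : ℝ)) * Q ^ (-1 + 1 / (k : ℝ))) := by
        refine Finset.sum_le_sum fun r hr => ?_
        have hr0 : (0 : ℝ) < r := by
          have := (Finset.mem_Ico.1 hr).1
          exact_mod_cast this
        have hE := mulFn_nonneg _ (E0_nonneg k) r
        have hterm : ∀ q ∈ (Finset.Ioc ⌊Q⌋₊ ⌊2 * Q⌋₊).filter (fun q => R q = r),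
            wk k q ^ k ≤ (r / Q) * mulFn (E0 k) r := by
          intro q hq
          obtain ⟨hq, hqr⟩ := Finset.mem_filter.1 hq
          obtain ⟨h0, hq1, hq2⟩ := hS q hq
          obtain ⟨h1, h2⟩ := hMR q h0
          rw [h2, hqr]
          refine mul_le_mul_of_nonneg_right ?_ hE
          have h3 : (q : ℝ) = (M q : ℝ) ^ k * r := by
            rw [hqr] at h1; exact_mod_cast h1
          have hm : (0 : ℝ) < (M q : ℝ) ^ k := by
            by_contra hcon
            nlinarith
          rw [inv_eq_one_div, div_le_div_iff₀ hm hQ0]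
          nlinarith
        have hcard : ((((Finset.Ioc ⌊Q⌋₊ ⌊2 * Q⌋₊).filter (fun q => R q = r)).card : ℕ) : ℝ)
            ≤ (2 * Q / r) ^ (1 / (k : ℝ)) := by
          have : ((Finset.Ioc ⌊Q⌋₊ ⌊2 * Q⌋₊).filter (fun q => R q = r)).card
              ≤ (Finset.Icc 1 ⌊(2 * Q / r) ^ (1 / (k : ℝ))⌋₊).card := by
            refine Finset.card_le_card_of_injOn M ?_ ?_
            · intro q hq
              obtain ⟨hq, hqr⟩ := Finset.mem_filter.1 hq
              obtain ⟨h0, hq1, hq2⟩ := hS q hq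
              obtain ⟨h1, h2⟩ := hMR q h0
              have h3 : (q : ℝ) = (M q : ℝ) ^ k * r := by
                rw [hqr] at h1; exact_mod_cast h1
              rw [Finset.mem_coe, Finset.mem_Icc]
              constructor
              · rcases Nat.eq_zero_or_pos (M q) with h | h
                · exfalso; apply h0; rw [h1, h, zero_pow (by omega), zero_mul]
                · exact h
              · apply Nat.le_floor
                have h4 : (M q : ℝ) ^ k ≤ 2 * Q / r := by
                  rw [le_div_iff₀ hr0]; linarith
                calc (M q : ℝ) = ((M q : ℝ) ^ k) ^ (1 / (k : ℝ)) := by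
                      rw [one_div, Real.pow_rpow_inv_natCast (by positivity) (by omega)]
                  _ ≤ _ := by gcongr
            · intro q hq q' hq' heq
              obtain ⟨hq, hqr⟩ := Finset.mem_filter.1 hq
              obtain ⟨hq', hqr'⟩ := Finset.mem_filter.1 hq'
              rw [(hMR q (hS q hq).1).1, (hMR q' (hS q' hq').1).1, heq, hqr, hqr']
          rw [Nat.card_Icc, Nat.add_sub_cancel] at this
          calc _ ≤ ((⌊(2 * Q / r) ^ (1 / (k : ℝ))⌋₊ : ℕ) : ℝ) := by exact_mod_cast this
            _ ≤ _ := Nat.floor_le (by positivity)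
        refine (Finset.sum_le_card_nsmul _ _ _ hterm).trans ?_
        rw [nsmul_eq_mul]
        calc _ ≤ (2 * Q / r) ^ (1 / (k : ℝ)) * ((r / Q) * mulFn (E0 k) r) := by gcongr
          _ = _ := by
            rw [Real.div_rpow (by positivity) hr0.le, Real.mul_rpow (by norm_num) hQ0.le,
              Real.rpow_sub hr0, Real.rpow_add hQ0, Real.rpow_one, Real.rpow_neg_one]
            field_simp
    _ = (∑ r ∈ Finset.Ico 1 (⌊2 * Q⌋₊ + 1), ((r : ℝ) ^ (1 - 1 / (k : ℝ)) * mulFn (E0 k) r)) *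
        (2 ^ (1 / (k : ℝ)) * Q ^ (-1 + 1 / (k : ℝ))) := by rw [Finset.sum_mul]
    _ ≤ B * (2 ^ (1 / (k : ℝ)) * Q ^ (-1 + 1 / (k : ℝ))) := by
        gcongr
        exact hBN _
    _ = _ := by ring

theorem wk_power_sums (ε : ℝ) (hε : 0 < ε) (k : ℕ) (hk : 4 ≤ k) :
    (∃ C₁ > 0, ∀ Q : ℝ, 1 ≤ Q →
      ∑ q ∈ Finset.Ioc ⌊Q⌋₊ ⌊2 * Q⌋₊, wk 3 q ^ 4 ≤ C₁ * Q ^ (-1 + ε)) ∧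
    (∃ C₂ > 0, ∀ Q : ℝ, 1 ≤ Q →
      ∑ q ∈ Finset.Ioc ⌊Q⌋₊ ⌊2 * Q⌋₊, wk k q ^ k ≤ C₂ * Q ^ (-1 + 1 / (k : ℝ))) := by
  refine ⟨?_, part_two k hk⟩
  obtain ⟨C, hC, h⟩ := part_one (min ε (1 / 2)) (lt_min hε (by norm_num))
    (lt_of_le_of_lt (min_le_right _ _) (by norm_num))
  refine ⟨C, hC, fun Q hQ => (h Q hQ).trans ?_⟩
  have := min_le_left ε (1 / 2)
  gcongr
end

section
/- Let k ≥ 3 be an integer and let j be an integer with 1 ≤ j ≤ k. For every fixed ε > 0 there is a constant C (depending only on ε and k) such that for all integers q ≥ 1 and all reals N ≥ 1, Σ_{N < n ≤ 2N} w_k(q / gcd(q, n^j)) ≤ C·q^ε·w_k(q)·N. -/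
open scoped BigOperators

/-- Local factor of `wk`. -/
noncomputable def wkLoc (k p a : ℕ) : ℝ :=
  if a = 0 then 1 else
    (if (a - 1) % k = 0 then
      (k : ℝ) * (p : ℝ) ^ (-(((a - 1) / k : ℕ) : ℝ) - 1 / 2)
    else
      (p : ℝ) ^ (-(((a - 1) / k : ℕ) : ℝ) - 1))

/-- Exponent of the local factor. -/
noncomputable def wkExp (k a : ℕ) : ℝ :=
  if a = 0 then 0 else
    (if (a - 1) % k = 0 then (((a - 1) / k : ℕ) : ℝ) + 1 / 2
    else (((a - 1) / k : ℕ) : ℝ) + 1)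

lemma wkExp_le (k a b t : ℕ) (hk : 3 ≤ k) (h : a ≤ b + k * t) :
    wkExp k a ≤ t + wkExp k b := by
  have hk0 : 0 < k := by omega
  unfold wkExp
  by_cases ha : a = 0
  · rw [if_pos ha]
    split_ifs <;> positivity
  rw [if_neg ha]
  by_cases hb : b = 0
  · rw [if_pos hb]
    have h1 : (a - 1) / k < t := by
      rw [Nat.div_lt_iff_lt_mul hk0, mul_comm]
      omega
    have h2 : (((a - 1) / k : ℕ) : ℝ) + 1 ≤ t := by exact_mod_cast h1
    split_ifs <;> linarith
  rw [if_neg hb]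
  have hle : a - 1 ≤ (b - 1) + k * t := by omega
  have h1 : (a - 1) / k ≤ (b - 1) / k + t := by
    calc (a - 1) / k ≤ ((b - 1) + k * t) / k := Nat.div_le_div_right hle
      _ = (b - 1) / k + t := Nat.add_mul_div_left _ _ hk0
  rcases Nat.lt_or_eq_of_le h1 with h2 | h2
  · have h3 : (((a - 1) / k : ℕ) : ℝ) + 1 ≤ (((b - 1) / k : ℕ) : ℝ) + t := by exact_mod_cast h2
    split_ifs <;> linarith
  · have h3 : (((a - 1) / k : ℕ) : ℝ) = (((b - 1) / k : ℕ) : ℝ) + t := by exact_mod_cast h2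
    have h4 : (b - 1) % k = 0 → (a - 1) % k = 0 := by
      intro h0
      have e1 := Nat.div_add_mod (a - 1) k
      have e2 := Nat.div_add_mod (b - 1) k
      rw [h2, mul_add] at e1
      omega
    split_ifs with c1 c2 c2
    · linarith
    · linarith
    · exact absurd (h4 c2) c1
    · linarith

lemma wkLoc_le (k p a : ℕ) (hk : 3 ≤ k) (hp : 0 < p) :
    wkLoc k p a ≤ k * (p : ℝ) ^ (-wkExp k a) := by
  have hk1 : (1 : ℝ) ≤ k := by exact_mod_cast (by omega : 1 ≤ k)
  have hp' : (0 : ℝ) < p := by exact_mod_cast hp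
  unfold wkLoc wkExp
  split_ifs
  · simpa using hk1
  · rw [neg_add, ← sub_eq_add_neg]
  · rw [neg_add, ← sub_eq_add_neg]
    exact le_mul_of_one_le_left (by positivity) hk1

lemma le_wkLoc (k p a : ℕ) (hk : 3 ≤ k) (hp : 0 < p) :
    (p : ℝ) ^ (-wkExp k a) ≤ wkLoc k p a := by
  have hk1 : (1 : ℝ) ≤ k := by exact_mod_cast (by omega : 1 ≤ k)
  have hp' : (0 : ℝ) < p := by exact_mod_cast hp
  unfold wkLoc wkExp
  split_ifs
  · simp
  · rw [neg_add, ← sub_eq_add_neg]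
    exact le_mul_of_one_le_left (by positivity) hk1
  · rw [neg_add, ← sub_eq_add_neg]

lemma wkLoc_nonneg (k p a : ℕ) : 0 ≤ wkLoc k p a := by
  unfold wkLoc
  split_ifs <;> positivity

lemma wkLoc_step (k p a b t : ℕ) (hk : 3 ≤ k) (hp : 0 < p) (h : a ≤ b + k * t) :
    wkLoc k p b ≤ k * (p : ℝ) ^ t * wkLoc k p a := by
  have hp' : (0 : ℝ) < p := by exact_mod_cast hp
  have hp1 : (1 : ℝ) ≤ p := by exact_mod_cast hp
  calc wkLoc k p b ≤ k * (p : ℝ) ^ (-wkExp k b) := wkLoc_le k p b hk hp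
    _ ≤ k * (p : ℝ) ^ ((t : ℝ) + -wkExp k a) := by
        gcongr
        linarith [wkExp_le k a b t hk h]
    _ = k * (p : ℝ) ^ t * (p : ℝ) ^ (-wkExp k a) := by
        rw [Real.rpow_add hp', Real.rpow_natCast, mul_assoc]
    _ ≤ _ := by
        gcongr
        exact le_wkLoc k p a hk hp

lemma wk_eq (k m : ℕ) (S : Finset ℕ) (h : m.primeFactors ⊆ S) :
    wk k m = ∏ p ∈ S, wkLoc k p (m.factorization p) := by
  rw [← Finset.prod_subset h]
  · unfold wk
    refine Finset.prod_congr rfl fun p hp => ?_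
    have : m.factorization p ≠ 0 := by
      rw [← Nat.support_factorization] at hp
      exact Finsupp.mem_support_iff.mp hp
    rw [wkLoc, if_neg this]
  · intro p _ hp
    have : m.factorization p = 0 := by
      rw [← Nat.support_factorization] at hp
      exact Finsupp.notMem_support_iff.mp hp
    rw [wkLoc, if_pos this]

lemma wk_nonneg (k m : ℕ) : 0 ≤ wk k m := by
  rw [wk_eq k m _ (Finset.Subset.refl _)]
  exact Finset.prod_nonneg fun p _ => wkLoc_nonneg _ _ _

lemma wk_gcd_le (k j q n : ℕ) (hk : 3 ≤ k) (hjk : j ≤ k) (hq : q ≠ 0) (hn : n ≠ 0) :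
    wk k (q / Nat.gcd q (n ^ j)) ≤
      (k : ℝ) ^ q.primeFactors.card * (Nat.gcd q n : ℝ) * wk k q := by
  have hd : Nat.gcd q (n ^ j) ∣ q := Nat.gcd_dvd_left _ _
  have hnj : n ^ j ≠ 0 := pow_ne_zero _ hn
  rw [wk_eq k _ q.primeFactors (Nat.primeFactors_mono (Nat.div_dvd_of_dvd hd) hq),
    wk_eq k q _ (Finset.Subset.refl _)]
  have hg : (Nat.gcd q n : ℝ) =
      ∏ p ∈ q.primeFactors, (p : ℝ) ^ (min (q.factorization p) (n.factorization p)) := by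
    have h0 : Nat.gcd q n ≠ 0 := Nat.gcd_ne_zero_left hq
    have h1 := Nat.prod_factorization_pow_eq_self h0
    rw [Finsupp.prod_of_support_subset _ (s := q.primeFactors)
      (by rw [Nat.support_factorization]
          exact Nat.primeFactors_mono (Nat.gcd_dvd_left _ _) hq) _ (by simp)] at h1
    conv_lhs => rw [← h1]
    rw [Nat.factorization_gcd hq hn]
    push_cast
    rfl
  rw [hg, ← Finset.prod_const, ← Finset.prod_mul_distrib, ← Finset.prod_mul_distrib]
  refine Finset.prod_le_prod (fun p _ => wkLoc_nonneg _ _ _) fun p hp => ?_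
  have hpp := Nat.prime_of_mem_primeFactors hp
  refine wkLoc_step k p _ _ _ hk hpp.pos ?_
  rw [Nat.factorization_div hd, Nat.factorization_gcd hq hnj, Nat.factorization_pow]
  simp only [Finsupp.coe_tsub, Pi.sub_apply, Finsupp.inf_apply, Finsupp.smul_apply, smul_eq_mul]
  generalize q.factorization p = a
  generalize n.factorization p = v
  have h1 : j * v ≤ k * v := Nat.mul_le_mul_right _ hjk
  have h2 : a ≤ k * a := Nat.le_mul_of_pos_left _ (by omega)
  rcases le_total a v with h | h
  · rw [min_eq_left h]; omega
  · rw [min_eq_right h]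
    have : a ⊓ (j * v) ≤ j * v := inf_le_right
    omega

lemma sum_gcd_le (q : ℕ) (hq : q ≠ 0) (M L : ℕ) :
    ∑ n ∈ Finset.Ioc M L, (Nat.gcd q n : ℝ) ≤ (q.divisors.card : ℝ) * L := by
  have h1 : ∀ n ∈ Finset.Ioc M L, (Nat.gcd q n : ℝ) ≤
      ∑ d ∈ q.divisors, if d ∣ n then (d : ℝ) else 0 := by
    intro n _
    have hm : Nat.gcd q n ∈ q.divisors := Nat.mem_divisors.mpr ⟨Nat.gcd_dvd_left _ _, hq⟩
    have := Finset.single_le_sum (f := fun d : ℕ => if d ∣ n then (d : ℝ) else 0)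
      (fun d _ => by positivity) hm
    simpa [Nat.gcd_dvd_right] using this
  refine (Finset.sum_le_sum h1).trans ?_
  rw [Finset.sum_comm]
  rw [← nsmul_eq_mul]
  refine Finset.sum_le_card_nsmul _ _ _ fun d _ => ?_
  rw [← Finset.sum_filter, Finset.sum_const, nsmul_eq_mul]
  have h2 : ((Finset.Ioc M L).filter (d ∣ ·)).card ≤ L / d := by
    rw [← Nat.Ioc_filter_dvd_card_eq_div]
    exact Finset.card_le_card (Finset.filter_subset_filter _
      (Finset.Ioc_subset_Ioc_left (Nat.zero_le _)))
  calc _ ≤ ((L / d : ℕ) : ℝ) * d := by gcongr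
    _ ≤ L := by exact_mod_cast Nat.div_mul_le_self L d

lemma div_bound (k : ℕ) (hk : 3 ≤ k) (ε : ℝ) (hε : 0 < ε) :
    ∃ C > 0, ∀ q : ℕ, q ≠ 0 →
      (k : ℝ) ^ q.primeFactors.card * (q.divisors.card : ℝ) ≤ C * (q : ℝ) ^ ε := by
  have hk1 : (1 : ℝ) ≤ k := by exact_mod_cast (by omega : 1 ≤ k)
  -- bound for small primes
  obtain ⟨M, hM1, hM⟩ : ∃ M : ℝ, 1 ≤ M ∧ ∀ a : ℕ, (k : ℝ) * (a + 1) ≤ M * (2 : ℝ) ^ (a * ε) := by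
    have hl : 0 < Real.log 2 := Real.log_pos (by norm_num)
    have hc : 0 < Real.log 2 * ε := by positivity
    refine ⟨k * (1 + 1 / (Real.log 2 * ε)), ?_, fun a => ?_⟩
    · have : 0 < 1 / (Real.log 2 * ε) := by positivity
      nlinarith
    · rw [mul_assoc]
      gcongr
      rw [Real.rpow_def_of_pos (by norm_num)]
      have h1 := Real.add_one_le_exp (Real.log 2 * (a * ε))
      have h2 : (1 : ℝ) ≤ Real.exp (Real.log 2 * (a * ε)) := Real.one_le_exp (by positivity)
      have h3 : (a : ℝ) ≤ 1 / (Real.log 2 * ε) * Real.exp (Real.log 2 * (a * ε)) := by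
        rw [div_mul_eq_mul_div, one_mul, le_div_iff₀ hc]
        linarith
      linarith
  obtain ⟨P, hP⟩ := exists_nat_ge ((2 * k : ℝ) ^ (1 / ε))
  have hbig : ∀ p a : ℕ, P ≤ p → (k : ℝ) * (a + 1) ≤ (p : ℝ) ^ (a * ε) ∨ a = 0 := by
    intro p a hp
    rcases Nat.eq_zero_or_pos a with h | h
    · exact Or.inr h
    left
    have h1 : (2 * k : ℝ) ≤ (p : ℝ) ^ ε := by
      have : (2 * k : ℝ) ^ (1 / ε) ≤ p := hP.trans (by exact_mod_cast hp)
      calc (2 * k : ℝ) = ((2 * k : ℝ) ^ (1 / ε)) ^ ε := by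
            rw [← Real.rpow_mul (by positivity), one_div, inv_mul_cancel₀ hε.ne', Real.rpow_one]
        _ ≤ _ := Real.rpow_le_rpow (by positivity) this hε.le
    have h2 : ((a : ℝ) + 1) ≤ 2 ^ a := by exact_mod_cast Nat.lt_two_pow_self (n := a)
    have h3 : (k : ℝ) ≤ (k : ℝ) ^ a := le_self_pow₀ hk1 h.ne'
    calc (k : ℝ) * (a + 1) ≤ (k : ℝ) ^ a * 2 ^ a := by gcongr
      _ = (2 * k : ℝ) ^ a := by rw [mul_pow, mul_comm]
      _ ≤ ((p : ℝ) ^ ε) ^ a := by gcongr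
      _ = (p : ℝ) ^ (a * ε) := by
        rw [← Real.rpow_natCast, ← Real.rpow_mul (by positivity), mul_comm]
  refine ⟨M ^ P, by positivity, fun q hq => ?_⟩
  rw [Nat.card_divisors hq]
  have hqe : (q : ℝ) ^ ε = ∏ p ∈ q.primeFactors, (p : ℝ) ^ ((q.factorization p : ℝ) * ε) := by
    conv_lhs => rw [← Nat.prod_factorization_pow_eq_self hq]
    rw [Finsupp.prod, Nat.support_factorization]
    push_cast
    rw [← Real.finsetProd_rpow _ _ (fun i _ => by positivity)]
    refine Finset.prod_congr rfl fun p _ => ?_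
    rw [← Real.rpow_natCast, ← Real.rpow_mul (by positivity)]
  have hM' : ∏ p ∈ q.primeFactors, (if p < P then M else 1) ≤ M ^ P := by
    rw [← Finset.prod_filter, Finset.prod_const]
    refine pow_le_pow_right₀ hM1 ?_
    calc _ ≤ (Finset.range P).card := Finset.card_le_card (by
            intro p hp; simp at hp ⊢; exact hp.2)
      _ = P := Finset.card_range P
  calc (k : ℝ) ^ q.primeFactors.card * ((∏ p ∈ q.primeFactors, (q.factorization p + 1) : ℕ) : ℝ)
      = ∏ p ∈ q.primeFactors, ((k : ℝ) * (q.factorization p + 1)) := by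
        rw [Finset.prod_mul_distrib, Finset.prod_const]; push_cast; rfl
    _ ≤ ∏ p ∈ q.primeFactors, ((if p < P then M else 1) *
          (p : ℝ) ^ ((q.factorization p : ℝ) * ε)) := by
        refine Finset.prod_le_prod (fun p _ => by positivity) fun p hp => ?_
        have hpp := Nat.prime_of_mem_primeFactors hp
        split_ifs with h
        · refine (hM _).trans ?_
          have : (2 : ℝ) ≤ p := by exact_mod_cast hpp.two_le
          gcongr
        · rw [one_mul]
          refine (hbig p _ (not_lt.mp h)).resolve_right ?_
          rw [← Nat.support_factorization] at hp
          exact Finsupp.mem_support_iff.mp hp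
    _ = (∏ p ∈ q.primeFactors, (if p < P then M else 1)) * (q : ℝ) ^ ε := by
        rw [Finset.prod_mul_distrib, hqe]
    _ ≤ _ := by gcongr

theorem wk_gcd_power_sum (k j : ℕ) (hk : 3 ≤ k) (hj1 : 1 ≤ j) (hjk : j ≤ k)
    (ε : ℝ) (hε : 0 < ε) :
    ∃ C > 0, ∀ q : ℕ, 1 ≤ q → ∀ N : ℝ, 1 ≤ N →
      ∑ n ∈ Finset.Ioc ⌊N⌋₊ ⌊2 * N⌋₊, wk k (q / Nat.gcd q (n ^ j)) ≤
        C * (q : ℝ) ^ ε * wk k q * N := by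
  obtain ⟨C, hC, hb⟩ := div_bound k hk ε hε
  refine ⟨2 * C, by positivity, fun q hq N hN => ?_⟩
  have hq0 : q ≠ 0 := by omega
  have hw := wk_nonneg k q
  have hL : ((⌊2 * N⌋₊ : ℕ) : ℝ) ≤ 2 * N := Nat.floor_le (by linarith)
  calc ∑ n ∈ Finset.Ioc ⌊N⌋₊ ⌊2 * N⌋₊, wk k (q / Nat.gcd q (n ^ j))
      ≤ ∑ n ∈ Finset.Ioc ⌊N⌋₊ ⌊2 * N⌋₊,
          (k : ℝ) ^ q.primeFactors.card * (Nat.gcd q n : ℝ) * wk k q := by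
        refine Finset.sum_le_sum fun n hn => wk_gcd_le k j q n hk hjk hq0 ?_
        have := (Finset.mem_Ioc.mp hn).1
        omega
    _ = (k : ℝ) ^ q.primeFactors.card *
          (∑ n ∈ Finset.Ioc ⌊N⌋₊ ⌊2 * N⌋₊, (Nat.gcd q n : ℝ)) * wk k q := by
        rw [Finset.mul_sum, Finset.sum_mul]
    _ ≤ (k : ℝ) ^ q.primeFactors.card * ((q.divisors.card : ℝ) * (2 * N)) * wk k q := by
        gcongr
        exact (sum_gcd_le q hq0 _ _).trans (by gcongr)
    _ = ((k : ℝ) ^ q.primeFactors.card * (q.divisors.card : ℝ)) * (2 * N * wk k q) := by ring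
    _ ≤ (C * (q : ℝ) ^ ε) * (2 * N * wk k q) := by
        have := hb q hq0
        gcongr
    _ = _ := by ring
end

section
/- Let k ≥ 1 be a fixed integer, let q and N be positive integers each exceeding 1, let 0 < δ < 1/2, and let a be an integer with q ∤ a. Let S denote the number of integers n with N < n ≤ 2N, gcd(n,q) = 1, and ‖a n^k / q‖ < δ, where ‖x‖ is the distance from x to the nearest integer. Then for every fixed ε > 0 there is a constant C (depending only on ε and k) such that S ≤ C·δ·q^ε·(q + N). -/
open scoped BigOperators Classical

theorem aux_group {G : Type*} [CommGroup G] [Fintype G] (H : Subgroup G) [IsCyclic H]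
    (k : ℕ) (hk : 0 < k) :
    (Finset.univ.filter (fun x : G => x ^ k = 1)).card ≤ k * H.index := by
  have hidx : H.index = (Finset.univ : Finset (G ⧸ H)).card := by
    rw [Finset.card_univ, ← Nat.card_eq_fintype_card]; rfl
  rw [hidx]
  apply Finset.card_le_mul_card_image_of_maps_to (f := fun x : G => (x : G ⧸ H))
  · intro a _; exact Finset.mem_univ _
  · intro b _
    rcases Finset.eq_empty_or_nonempty
      ((Finset.univ.filter (fun x : G => x ^ k = 1)).filter (fun x : G => (x : G ⧸ H) = b)) with h | h
    · rw [h]; simp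
    · obtain ⟨x0, hx0⟩ := h
      simp only [Finset.mem_filter, Finset.mem_univ, true_and] at hx0
      refine le_trans ?_ (IsCyclic.card_pow_eq_one_le (α := H) hk)
      have hmem : ∀ x : G, (x : G ⧸ H) = b → x0⁻¹ * x ∈ H := by
        intro x hx
        rw [← QuotientGroup.eq, hx, hx0.2]
      refine Finset.card_le_card_of_injOn
        (fun x => if h : x0⁻¹ * x ∈ H then (⟨x0⁻¹ * x, h⟩ : H) else 1) ?_ ?_
      · intro x hx
        simp only [Finset.coe_filter, Finset.mem_filter, Finset.mem_univ, true_and,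
          Set.mem_ofPred_eq] at hx ⊢
        rw [dif_pos (hmem x hx.2)]
        apply Subtype.ext
        simp [mul_pow, hx.1, hx0.1]
      · intro x hx y hy hxy
        simp only [Finset.coe_filter, Finset.mem_filter, Finset.mem_univ, true_and,
          Set.mem_ofPred_eq] at hx hy
        simp only [dif_pos (hmem x hx.2), dif_pos (hmem y hy.2), Subtype.mk.injEq] at hxy
        exact mul_left_cancel hxy

theorem aux_two (k : ℕ) (hk : 0 < k) (m : ℕ) :
    Nat.card {x : (ZMod (2 ^ m))ˣ // x ^ k = 1} ≤ 2 * k := by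
  have key : ∃ H : Subgroup (ZMod (2 ^ m))ˣ, IsCyclic H ∧ H.index ≤ 2 := by
    by_cases hm : m ≤ 2
    · have := (ZMod.isCyclic_units_two_pow_iff m).2 hm
      exact ⟨⊤, inferInstance, by simp⟩
    · obtain ⟨n, rfl⟩ : ∃ n, m = n + 2 := ⟨m - 2, by omega⟩
      have h5 : IsUnit (5 : ZMod (2 ^ (n + 2))) := by
        have : ((5 : ℕ) : ZMod (2 ^ (n + 2))) = 5 := by norm_num
        rw [← this, ZMod.isUnit_iff_coprime]
        exact Nat.Coprime.pow_right _ (by norm_num)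
      obtain ⟨u, hu⟩ := h5
      refine ⟨Subgroup.zpowers u, inferInstance, ?_⟩
      have h1 := (Subgroup.zpowers u).card_mul_index
      rw [Nat.card_zpowers, ← orderOf_units, hu, ZMod.orderOf_five, Nat.card_eq_fintype_card,
        ZMod.card_units_eq_totient, Nat.totient_prime_pow Nat.prime_two (by omega)] at h1
      have h2 : (2:ℕ) ^ n * (Subgroup.zpowers u).index = 2 ^ n * 2 := by
        rw [h1]; simp [pow_succ]
      exact (Nat.eq_of_mul_eq_mul_left (by positivity) h2).le
  obtain ⟨H, hH, hi⟩ := key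
  have := aux_group H k hk
  rw [Nat.card_eq_fintype_card, Fintype.card_subtype]
  have h3 : k * H.index ≤ 2 * k := by rw [mul_comm]; exact Nat.mul_le_mul_right _ hi
  refine le_trans (le_of_eq ?_) (this.trans h3)
  congr

theorem aux_pp (k : ℕ) (hk : 0 < k) (p m : ℕ) (hp : p.Prime) :
    Nat.card {x : (ZMod (p ^ m))ˣ // x ^ k = 1} ≤ 2 * k := by
  by_cases h2 : p = 2
  · subst h2; exact aux_two k hk m
  · have := ZMod.isCyclic_units_of_prime_pow p hp h2 m
    have : NeZero (p ^ m) := ⟨pow_ne_zero _ hp.ne_zero⟩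
    have h := IsCyclic.card_pow_eq_one_le (α := (ZMod (p ^ m))ˣ) hk
    rw [Nat.card_eq_fintype_card, Fintype.card_subtype]
    omega

theorem aux_omega (k : ℕ) (hk : 0 < k) (q : ℕ) (hq : 0 < q) :
    Nat.card {x : (ZMod q)ˣ // x ^ k = 1} ≤ (2 * k) ^ q.primeFactors.card := by
  induction q using Nat.recOnPosPrimePosCoprime with
  | prime_pow p n hp hn =>
    rw [Nat.primeFactors_prime_pow hn.ne' hp]
    simpa using aux_pp k hk p n hp
  | zero => omega
  | one => 
    simp only [Nat.primeFactors_one, Finset.card_empty, pow_zero]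
    exact Finite.card_le_one_iff_subsingleton.2 inferInstance
  | coprime a b ha hb hab iha ihb =>
    have ha' := iha (by omega)
    have hb' := ihb (by omega)
    have : NeZero a := ⟨by omega⟩
    have : NeZero b := ⟨by omega⟩
    rw [hab.primeFactors_mul, Finset.card_union_of_disjoint hab.disjoint_primeFactors, pow_add]
    refine le_trans ?_ (Nat.mul_le_mul ha' hb')
    rw [← Nat.card_prod]
    let e := ((Units.mapEquiv (ZMod.chineseRemainder hab).toMulEquiv).trans MulEquiv.prodUnits)
    refine Nat.card_le_card_of_injective
      (fun x => (⟨(e x.1).1, ?_⟩, ⟨(e x.1).2, ?_⟩)) ?_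
    · rw [← Prod.pow_fst, ← map_pow, x.2, map_one]; rfl
    · rw [← Prod.pow_snd, ← map_pow, x.2, map_one]; rfl
    · intro x y hxy
      simp only [Prod.mk.injEq, Subtype.mk.injEq] at hxy
      exact Subtype.ext (e.injective (Prod.ext hxy.1 hxy.2))

theorem aux_bound (k : ℕ) (hk : 0 < k) (ε : ℝ) (hε : 0 < ε) :
    ∃ C : ℝ, 0 < C ∧ ∀ q : ℕ, 0 < q →
      (Nat.card {x : (ZMod q)ˣ // x ^ k = 1} : ℝ) ≤ C * (q : ℝ) ^ ε := by
  have hA : (1:ℝ) ≤ 2 * k := by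
    have : (1:ℝ) ≤ k := by exact_mod_cast hk
    linarith
  obtain ⟨P, hP⟩ := exists_nat_ge ((2 * (k:ℝ)) ^ (1 / ε))
  refine ⟨(2 * k) ^ P, by positivity, fun q hq => ?_⟩
  have h1 : (Nat.card {x : (ZMod q)ˣ // x ^ k = 1} : ℝ) ≤ (2 * k : ℝ) ^ q.primeFactors.card := by
    exact_mod_cast aux_omega k hk q hq
  refine h1.trans ?_
  rw [← Finset.prod_const]
  have h2 : ∏ p ∈ q.primeFactors, (2 * k : ℝ) ≤
      ∏ p ∈ q.primeFactors, ((if p < P then (2 * k : ℝ) else 1) * (p : ℝ) ^ ε) := by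
    apply Finset.prod_le_prod
    · intros; positivity
    · intro p hp
      have hp1 : (1:ℝ) ≤ p := by exact_mod_cast (Nat.prime_of_mem_primeFactors hp).one_le
      split_ifs with h
      · exact le_mul_of_one_le_right (by positivity) (Real.one_le_rpow hp1 hε.le)
      · rw [one_mul]
        have h3 : (2 * (k:ℝ)) ^ (1 / ε) ≤ p := hP.trans (by exact_mod_cast not_lt.1 h)
        calc (2 * (k:ℝ)) = ((2 * (k:ℝ)) ^ (1 / ε)) ^ ε := by
              rw [← Real.rpow_mul (by positivity), one_div_mul_cancel hε.ne', Real.rpow_one]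
          _ ≤ _ := Real.rpow_le_rpow (by positivity) h3 hε.le
  refine h2.trans ?_
  rw [Finset.prod_mul_distrib]
  apply mul_le_mul
  · rw [Finset.prod_ite, Finset.prod_const, Finset.prod_const_one, mul_one]
    apply pow_le_pow_right₀ hA
    calc _ ≤ (Finset.range P).card := Finset.card_le_card (by
            intro p hp; simp only [Finset.mem_filter] at hp; exact Finset.mem_range.2 hp.2)
      _ = P := Finset.card_range P
  · rw [Real.finsetProd_rpow _ _ (by intros; positivity)]
    apply Real.rpow_le_rpow (Finset.prod_nonneg (by intros; positivity)) _ hε.le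
    have h6 : ((∏ p ∈ q.primeFactors, p : ℕ) : ℝ) ≤ q :=
      Nat.cast_le.2 (Nat.le_of_dvd hq (Nat.prod_primeFactors_dvd q))
    rwa [Nat.cast_prod] at h6
  · exact Finset.prod_nonneg (by intros; positivity)
  · positivity

theorem aux_class (d N : ℕ) (hd : 0 < d) (v : ℕ) :
    ((Finset.Ioc N (2 * N)).filter (fun n => n ≡ v [MOD d])).card ≤ N / d + 1 := by
  have h := Nat.Ioc_filter_modEq_card N (2 * N) hd v
  have hd' : (0:ℚ) < d := by exact_mod_cast hd
  have h2 : (((Finset.Ioc N (2 * N)).filter (fun n => n ≡ v [MOD d])).card : ℤ)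
      ≤ ((N / d + 1 : ℕ) : ℤ) := by
    rw [h]
    apply max_le _ (by positivity)
    have h3 : ((2 * N : ℕ) - (v:ℚ)) / d = ((N : ℚ) - v) / d + (N:ℚ) / d := by
      push_cast; ring
    rw [h3]
    have h4 := Int.le_floor_add_floor (((N : ℚ) - v) / d) ((N:ℚ) / d)
    have h5 : ⌊(N:ℚ) / d⌋ = ((N / d : ℕ) : ℤ) := by
      exact_mod_cast Rat.floor_natCast_div_natCast N d
    push_cast at h5 ⊢
    omega
  exact_mod_cast h2

theorem aux_roots (d k : ℕ) (hd : 0 < d) (u : (ZMod d)ˣ) [Fintype (ZMod d)ˣ] (j : ZMod d) :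
    (Finset.univ.filter (fun x : (ZMod d)ˣ => (u : ZMod d) * (x : ZMod d) ^ k = j)).card ≤
      Nat.card {x : (ZMod d)ˣ // x ^ k = 1} := by
  rw [Nat.card_eq_fintype_card, Fintype.card_subtype]
  rcases Finset.eq_empty_or_nonempty
    (Finset.univ.filter (fun x : (ZMod d)ˣ => (u : ZMod d) * (x : ZMod d) ^ k = j)) with h | h
  · rw [h]; simp
  · obtain ⟨x0, hx0⟩ := h
    simp only [Finset.mem_filter, Finset.mem_univ, true_and] at hx0
    refine Finset.card_le_card_of_injOn (fun x => x0⁻¹ * x) ?_ ?_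
    · intro x hx
      simp only [Finset.coe_filter, Finset.mem_univ, true_and, Set.mem_ofPred_eq] at hx ⊢
      have : x0 ^ k = x ^ k := by
        apply mul_left_cancel (a := u)
        apply Units.ext
        push_cast
        rw [hx, hx0]
      rw [mul_pow, ← this, inv_pow, inv_mul_cancel]
    · intro x _ y _ hxy
      exact mul_left_cancel hxy

theorem aux_Sj (d N k : ℕ) (hd : 0 < d) (b : ℤ) (hb : IsCoprime b d) (j : ZMod d) :
    ((Finset.Ioc N (2 * N)).filter (fun n => Nat.gcd n d = 1 ∧
      (b : ZMod d) * (n : ZMod d) ^ k = j)).card ≤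
      (N / d + 1) * Nat.card {x : (ZMod d)ˣ // x ^ k = 1} := by
  have : NeZero d := ⟨hd.ne'⟩
  obtain ⟨u, hu⟩ : IsUnit (b : ZMod d) := by
    obtain ⟨s, t, hst⟩ := hb
    have := congrArg (Int.cast : ℤ → ZMod d) hst
    push_cast at this
    rw [ZMod.natCast_self, mul_zero, add_zero] at this
    exact IsUnit.of_mul_eq_one_right _ this
  refine le_trans ?_ (Nat.mul_le_mul_left _ (aux_roots d k hd u j))
  refine Finset.card_le_mul_card_image_of_maps_to
    (f := fun n : ℕ => if h : Nat.Coprime n d then ZMod.unitOfCoprime n h else 1) ?_ _ ?_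
  · intro n hn
    simp only [Finset.mem_filter, Finset.mem_univ, true_and] at hn ⊢
    have hc : Nat.Coprime n d := hn.2.1
    rw [dif_pos hc, ZMod.coe_unitOfCoprime, hu]
    exact hn.2.2
  · intro x _
    refine le_trans (Finset.card_le_card ?_) (aux_class d N hd (x : ZMod d).val)
    intro n hn
    simp only [Finset.mem_filter] at hn ⊢
    have hc : Nat.Coprime n d := hn.1.2.1
    refine ⟨hn.1.1, ?_⟩
    have h := hn.2
    rw [dif_pos hc] at h
    rw [← ZMod.natCast_eq_natCast_iff, ← h, ZMod.coe_unitOfCoprime]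
    simp

theorem counting_lemma (k : ℕ) (hk : 1 ≤ k) (ε : ℝ) (hε : 0 < ε) :
    ∃ C > 0, ∀ q N : ℕ, 1 < q → 1 < N → ∀ δ : ℝ, 0 < δ → δ < 1 / 2 →
      ∀ a : ℤ, ¬ ((q : ℤ) ∣ a) →
      (((Finset.Ioc N (2 * N)).filter (fun n => Nat.gcd n q = 1 ∧
          |(a : ℝ) * (n : ℝ) ^ k / (q : ℝ) -
            (round ((a : ℝ) * (n : ℝ) ^ k / (q : ℝ)) : ℤ)| < δ)).card : ℝ) ≤
        C * δ * (q : ℝ) ^ ε * ((q : ℝ) + (N : ℝ)) := by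
  obtain ⟨C, hC, hbound⟩ := aux_bound k hk ε hε
  refine ⟨2 * C, by positivity, fun q N hq hN δ hδ _ a ha => ?_⟩
  obtain ⟨g, b, d, hg, hb, hag, hqg⟩ : ∃ (g : ℕ) (b : ℤ) (d : ℕ), 0 < g ∧ IsCoprime b (d : ℤ) ∧
      a = b * g ∧ q = d * g := by
    have hpos : 0 < Int.gcd a q := Int.gcd_pos_of_ne_zero_right _ (by omega)
    obtain ⟨b, hb⟩ := Int.gcd_dvd_left a q
    obtain ⟨d, hd⟩ : Int.gcd a q ∣ q := by exact_mod_cast Int.gcd_dvd_right a q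
    refine ⟨Int.gcd a q, b, d, hpos, ?_, by rw [mul_comm]; exact hb, by rw [mul_comm]; exact hd⟩
    obtain ⟨s, t, hst⟩ : ∃ s t : ℤ, (Int.gcd a q : ℤ) = s * a + t * q :=
      ⟨Int.gcdA a q, Int.gcdB a q, by rw [Int.gcd_eq_gcd_ab]; ring⟩
    refine ⟨s, t, ?_⟩
    have hd' : (q : ℤ) = (Int.gcd a q : ℤ) * d := by exact_mod_cast hd
    have hne : (Int.gcd a q : ℤ) ≠ 0 := by exact_mod_cast hpos.ne'
    generalize Int.gcd a q = G at *
    apply mul_left_cancel₀ hne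
    rw [hb, hd'] at hst
    linear_combination -hst
  have hd0 : 0 < d := by
    rcases Nat.eq_zero_or_pos d with h | h
    · subst h; omega
    · exact h
  have hd1 : d ≠ 1 := by
    rintro rfl
    apply ha
    rw [hag, hqg]
    simp
  have hdq : d ≤ q := by rw [hqg]; exact Nat.le_mul_of_pos_right _ hg
  have hdR : (0:ℝ) < d := by exact_mod_cast hd0
  have hgR : (0:ℝ) < g := by exact_mod_cast hg
  set L : ℕ := ⌊δ * d⌋₊ with hL
  set F := Nat.card {x : (ZMod d)ˣ // x ^ k = 1} with hF
  have hcard : ((Finset.Ioc N (2 * N)).filter (fun n => Nat.gcd n q = 1 ∧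
          |(a : ℝ) * (n : ℝ) ^ k / (q : ℝ) -
            (round ((a : ℝ) * (n : ℝ) ^ k / (q : ℝ)) : ℤ)| < δ)).card ≤
      (2 * L) * ((N / d + 1) * F) := by
    have hJ : ((Finset.Icc (-(L:ℤ)) L).erase 0).card = 2 * L := by
      rw [Finset.card_erase_of_mem (by simp), Int.card_Icc]
      omega
    rw [← hJ]
    refine le_trans (Finset.card_le_card (t := ((Finset.Icc (-(L:ℤ)) L).erase 0).biUnion
      (fun j => (Finset.Ioc N (2 * N)).filter (fun n => Nat.gcd n d = 1 ∧
      (b : ZMod d) * (n : ZMod d) ^ k = (j : ZMod d)))) ?_)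
      (Finset.card_biUnion_le_card_mul _ _ _ (fun j _ => aux_Sj d N k hd0 b hb j))
    intro n hn
    simp only [Finset.mem_filter] at hn
    obtain ⟨hnI, hnq, hlt⟩ := hn
    have hnd : Nat.gcd n d = 1 := by
      have : Nat.Coprime n (d * g) := hqg ▸ hnq
      exact Nat.Coprime.coprime_mul_right_right this
    have hfrac : (a : ℝ) * (n : ℝ) ^ k / (q : ℝ) = (b : ℝ) * (n : ℝ) ^ k / (d : ℝ) := by
      rw [hag, hqg]; push_cast; field_simp
    rw [hfrac] at hlt
    set r : ℤ := round ((b : ℝ) * (n : ℝ) ^ k / (d : ℝ)) with hr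
    have hjlt : |((b * (n:ℤ) ^ k - r * d : ℤ) : ℝ)| < δ * d := by
      have : ((b * (n:ℤ) ^ k - r * d : ℤ) : ℝ) = ((b : ℝ) * (n : ℝ) ^ k / (d : ℝ) - r) * d := by
        push_cast; field_simp
      rw [this, abs_mul, abs_of_pos hdR]
      exact mul_lt_mul_of_pos_right hlt hdR
    have hjL : |b * (n:ℤ) ^ k - r * d| ≤ L := by
      have h1 : (b * (n:ℤ) ^ k - r * d).natAbs ≤ L := by
        apply Nat.le_floor
        rw [Nat.cast_natAbs]
        push_cast at hjlt ⊢
        exact hjlt.le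
      rw [Int.abs_eq_natAbs]
      exact_mod_cast h1
    simp only [Finset.mem_biUnion, Finset.mem_erase, Finset.mem_Icc, Finset.mem_filter]
    refine ⟨b * (n:ℤ) ^ k - r * d, ⟨?_, abs_le.1 hjL⟩, hnI, hnd, by simp⟩
    intro h0
    have hcop : IsCoprime (b * (n:ℤ) ^ k) (d : ℤ) :=
      IsCoprime.mul_left hb (IsCoprime.pow_left (Nat.isCoprime_iff_coprime.2 hnd))
    have hdv : (d : ℤ) ∣ b * (n:ℤ) ^ k := ⟨r, by linarith⟩
    have := hcop.isUnit_of_dvd' hdv dvd_rfl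
    rw [Int.isUnit_iff] at this
    omega
  have hLR : (L : ℝ) ≤ δ * d := Nat.floor_le (by positivity)
  have hND : ((N / d : ℕ) : ℝ) ≤ N / d := Nat.cast_div_le
  have hFR : (F : ℝ) ≤ C * (q : ℝ) ^ ε := by
    refine (hbound d hd0).trans ?_
    gcongr
  calc _ ≤ (((2 * L) * ((N / d + 1) * F) : ℕ) : ℝ) := by exact_mod_cast hcard
    _ = 2 * (L : ℝ) * ((((N / d : ℕ) : ℝ) + 1) * F) := by push_cast; ring
    _ ≤ 2 * (δ * d) * (((N : ℝ) / d + 1) * (C * (q : ℝ) ^ ε)) := by gcongr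
    _ = 2 * C * δ * (q : ℝ) ^ ε * ((d : ℝ) + N) := by field_simp; ring
    _ ≤ _ := by gcongr
end
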